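/- arXiv:1004.4423 — 2 statements merged into one kernel-verified Lean document; each statement's English description precedes it below -/
import Mathlib

section
/- Let X be a quandle and let f ∈ C^k, g ∈ C^m be rack cochains on C_•(X) (with coefficients in an abelian group) that vanish on all degenerate tuples (those with xᵢ = x_{i+1} for some i). Then the cup product f∪g, defined by the shuffle-sum formula over subsets, also vanishes on all degenerate tuples; i.e., quandle cochains are closed under the cup product. -/
/-- Zero-face `δ⁰ᵢ` of the □-set `B(X)` (tuples as lists, 0-based index). -/
def face0 {X : Type*} (l : List X) (i : ℕ) : List X := l.eraseIdx i

/-- One-face `δ¹ᵢ` of the □-set `B(X)`: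
`(x₁,…,xₙ) ↦ (x₁*xᵢ,…,x_{i-1}*xᵢ, x_{i+1},…,xₙ)`. -/
def face1 {X : Type*} (act : X → X → X) (l : List X) (i : ℕ) : List X :=
  match l[i]? with
  | some b => (l.take i).map (fun a => act a b) ++ l.drop (i + 1)
  | none => l

/-- Iterated face `δ^ε_A`, applied from the largest index down. -/
def multiFace {X : Type*} (f : List X → ℕ → List X) (S : Finset ℕ) (l : List X) :
    List X :=
  ((S.sort (· ≤ ·)).reverse).foldl f l

/-- The shuffle sign `ε(A)`. -/
def shuffleSign (S T : Finset ℕ) : ℤ :=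
  (-1) ^ (((S ×ˢ T).filter fun p => p.1 < p.2).card)

/-- The cup product `(f∪g)(x) = (-1)^{km} Σ_A ε(A) f(δ⁰_A x) g(δ¹_B x)`,
summing over subsets `A ⊆ [k+m]` of size `m` with complement `B`. -/
def cup {X A : Type*} [CommRing A] (act : X → X → X) (k m : ℕ)
    (f g : List X → A) : List X → A :=
  fun l => (-1 : A) ^ (k * m) *
    ∑ S ∈ Finset.powersetCard m (Finset.range (k + m)),
      (shuffleSign S (Finset.range (k + m) \ S) : A) *
        (f (multiFace face0 S l) *
          g (multiFace (face1 act) (Finset.range (k + m) \ S) l))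

/-- A tuple is degenerate if two consecutive entries coincide. -/
def Degenerate {X : Type*} (l : List X) : Prop :=
  ∃ (l₁ : List X) (a : X) (l₂ : List X), l = l₁ ++ a :: a :: l₂

theorem multiFace_insert_max {X : Type*} (f : List X → ℕ → List X) (S : Finset ℕ) (M : ℕ)
    (h : ∀ x ∈ S, x < M) (l : List X) :
    multiFace f (insert M S) l = multiFace f S (f l M) := by
  have hs : (insert M S).sort (· ≤ ·) = S.sort (· ≤ ·) ++ [M] := by
    apply List.Perm.eq_of_pairwise' (r := (· ≤ ·))
    · exact Finset.pairwise_sort _ _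
    · rw [List.pairwise_append]
      refine ⟨Finset.pairwise_sort _ _, by simp, ?_⟩
      intro a ha b hb
      simp at ha hb
      subst hb
      exact (h a ha).le
    · rw [List.perm_ext_iff_of_nodup (Finset.sort_nodup _ _)]
      · intro a; simp [or_comm]
      · rw [List.nodup_append]
        refine ⟨Finset.sort_nodup _ _, by simp, ?_⟩
        intro a ha b hb
        simp at ha hb
        subst hb
        exact (h a ha).ne
  simp [multiFace, hs]

/-- The properties of the faces used below. -/
structure GoodFace {X : Type*} (f : List X → ℕ → List X) : Prop where
  hi : ∀ p a q j, p.length + 2 ≤ j → ∃ p' a' q', p'.length = p.length ∧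
    f (p ++ a :: a :: q) j = p' ++ a' :: a' :: q'
  lo : ∀ p a q j, j < p.length → ∃ p' a' q', p'.length + 1 = p.length ∧
    f (p ++ a :: a :: q) j = p' ++ a' :: a' :: q'
  mid : ∀ p a q, f (p ++ a :: a :: q) p.length = f (p ++ a :: a :: q) (p.length + 1)

theorem goodFace0 {X : Type*} : GoodFace (face0 (X := X)) where
  hi p a q j h := by
    obtain ⟨t, rfl⟩ := Nat.exists_eq_add_of_le h
    refine ⟨p, a, q.eraseIdx t, rfl, ?_⟩
    rw [face0, List.eraseIdx_append_of_length_le (by omega)]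
    have : p.length + 2 + t - p.length = t + 2 := by omega
    simp [this]
  lo p a q j h := by
    refine ⟨p.eraseIdx j, a, q, ?_, ?_⟩
    · rw [List.length_eraseIdx_of_lt h]; omega
    · rw [face0, List.eraseIdx_append_of_lt_length h]
  mid p a q := by
    simp [face0, List.eraseIdx_append_of_length_le]

theorem goodFace1 {X : Type*} (act : X → X → X) (hidem : ∀ a : X, act a a = a) :
    GoodFace (face1 act) where
  hi p a q j h := by
    obtain ⟨t, rfl⟩ := Nat.exists_eq_add_of_le h
    have e : p.length + 2 + t - p.length = t + 2 := by omega
    have e3 : p.length + 2 + t + 1 - p.length = t + 3 := by omega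
    have e2 : (p ++ a :: a :: q)[p.length + 2 + t]? = q[t]? := by
      rw [List.getElem?_append_right (by omega), e]; simp
    unfold face1
    rw [e2]
    cases q[t]? with
    | none => exact ⟨p, a, q, rfl, rfl⟩
    | some b =>
      refine ⟨p.map (fun x => act x b), act a b, (q.take t).map (fun x => act x b) ++
        q.drop (t + 1), by simp, ?_⟩
      have e4 : p.take (p.length + 2 + t) = p := List.take_of_length_le (by omega)
      have e5 : p.drop (p.length + 2 + t + 1) = [] := List.drop_of_length_le (by omega)
      simp only [List.take_append, List.drop_append, e, e3, e4, e5]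
      simp
  lo p a q j h := by
    have e2 : (p ++ a :: a :: q)[j]? = some p[j] := by
      rw [List.getElem?_append_left h]; simp
    unfold face1
    rw [e2]
    refine ⟨(p.take j).map (fun x => act x p[j]) ++ p.drop (j + 1), a, q, ?_, ?_⟩
    · simp; omega
    · have e3 : j - p.length = 0 := by omega
      have e4 : j + 1 - p.length = 0 := by omega
      simp [List.take_append, List.drop_append, e3, e4]
  mid p a q := by
    have e1 : (p ++ a :: a :: q)[p.length]? = some a := by simp
    have e2 : (p ++ a :: a :: q)[p.length + 1]? = some a := by
      rw [List.getElem?_append_right (by omega)]; simp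
    have e3 : p.length + 1 + 1 - p.length = 2 := by omega
    have e5 : p.drop (p.length + 1 + 1) = [] := List.drop_of_length_le (by omega)
    have e6 : p.take (p.length + 1) = p := List.take_of_length_le (by omega)
    unfold face1
    rw [e1, e2]
    simp [List.take_append, List.drop_append, e3, e5, e6, hidem]

theorem GoodFace.degenerate {X : Type*} {f : List X → ℕ → List X} (hf : GoodFace f)
    (S : Finset ℕ) : ∀ (p : List X) (a : X) (q : List X), p.length ∉ S → p.length + 1 ∉ S →
    Degenerate (multiFace f S (p ++ a :: a :: q)) := by
  induction S using Finset.induction_on_max with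
  | empty => intro p a q _ _; exact ⟨p, a, q, by simp [multiFace]⟩
  | insert M S hM ih =>
    intro p a q h1 h2
    rw [multiFace_insert_max f S M hM]
    simp only [Finset.mem_insert, not_or] at h1 h2
    rcases lt_or_ge M p.length with h | h
    · obtain ⟨p', a', q', hl, he⟩ := hf.lo p a q M h
      rw [he]
      exact ih p' a' q' (fun hh => by have := hM _ hh; omega)
        (fun hh => by have := hM _ hh; omega)
    · obtain ⟨p', a', q', hl, he⟩ := hf.hi p a q M (by omega)
      rw [he]
      exact ih p' a' q' (hl ▸ h1.2) (hl ▸ h2.2)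

theorem GoodFace.swap {X : Type*} {f : List X → ℕ → List X} (hf : GoodFace f)
    (S : Finset ℕ) : ∀ (p : List X) (a : X) (q : List X), p.length ∉ S → p.length + 1 ∉ S →
    multiFace f (insert p.length S) (p ++ a :: a :: q) =
      multiFace f (insert (p.length + 1) S) (p ++ a :: a :: q) := by
  induction S using Finset.induction_on_max with
  | empty =>
    intro p a q _ _
    rw [multiFace_insert_max _ _ _ (by simp), multiFace_insert_max _ _ _ (by simp), hf.mid]
  | insert M S hM ih =>
    intro p a q h1 h2
    simp only [Finset.mem_insert, not_or] at h1 h2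
    rcases lt_or_ge M p.length with h | h
    · have hlt : ∀ x ∈ insert M S, x < p.length := by
        intro x hx
        rcases Finset.mem_insert.1 hx with rfl | hx
        · exact h
        · exact (hM x hx).trans h
      rw [multiFace_insert_max _ _ _ hlt,
        multiFace_insert_max _ _ _ (fun x hx => (hlt x hx).trans (Nat.lt_succ_self _)), hf.mid]
    · obtain ⟨p', a', q', hl, he⟩ := hf.hi p a q M (by omega)
      rw [Finset.insert_comm, Finset.insert_comm (p.length + 1),
        multiFace_insert_max f (insert p.length S) M,
        multiFace_insert_max f (insert (p.length + 1) S) M, he, ← hl]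
      · exact ih p' a' q' (hl ▸ h1.2) (hl ▸ h2.2)
      all_goals
        intro x hx
        rcases Finset.mem_insert.1 hx with rfl | hx
        · omega
        · exact hM x hx

theorem shuffleSign_swap (i : ℕ) (R Q : Finset ℕ) (h1 : i ∉ R) (h2 : i + 1 ∉ R)
    (h3 : i ∉ Q) (h4 : i + 1 ∉ Q) :
    shuffleSign (insert i R) (insert (i + 1) Q) =
      - shuffleSign (insert (i + 1) R) (insert i Q) := by
  have key : (((insert i R) ×ˢ (insert (i + 1) Q)).filter fun p => p.1 < p.2).card =
      (((insert (i + 1) R) ×ˢ (insert i Q)).filter fun p => p.1 < p.2).card + 1 := by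
    simp only [Finset.card_filter, Finset.sum_product, Finset.sum_insert h1,
      Finset.sum_insert h2, Finset.sum_insert h3, Finset.sum_insert h4, Finset.sum_add_distrib]
    have a1 : ∑ x ∈ Q, (if i < x then 1 else 0) = ∑ x ∈ Q, (if i + 1 < x then 1 else 0) := by
      apply Finset.sum_congr rfl
      intro x hx
      have : x ≠ i + 1 := fun h => h4 (h ▸ hx)
      congr 1
      apply propext
      omega
    have a2 : ∑ x ∈ R, (if x < i + 1 then 1 else 0) = ∑ x ∈ R, (if x < i then 1 else 0) := by
      apply Finset.sum_congr rfl
      intro x hx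
      have : x ≠ i := fun h => h1 (h ▸ hx)
      congr 1
      apply propext
      omega
    rw [a1, a2]
    simp
    omega
  rw [shuffleSign, shuffleSign, key, pow_succ]
  ring

theorem image_swap_insert (i : ℕ) (R : Finset ℕ) (h1 : i ∉ R) (h2 : i + 1 ∉ R) :
    R.image (Equiv.swap i (i + 1)) = R := by
  conv_rhs => rw [← Finset.image_id (s := R)]
  apply Finset.image_congr
  intro x hx
  exact Equiv.swap_apply_of_ne_of_ne (fun h => h1 (h ▸ hx)) (fun h => h2 (h ▸ hx))

/-- For a quandle `X`, cochains vanishing on degenerate tuples are closed under the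
cup product. -/
theorem stmt_18 {X A : Type*} [CommRing A] (act : X → X → X)
    (hidem : ∀ a : X, act a a = a)
    (hbij : ∀ b : X, Function.Bijective fun a => act a b)
    (hdist : ∀ a b c : X, act (act a b) c = act (act a c) (act b c))
    (k m : ℕ) (f g : List X → A)
    (hf : ∀ l : List X, Degenerate l → f l = 0)
    (hg : ∀ l : List X, Degenerate l → g l = 0) :
    ∀ l : List X, l.length = k + m → Degenerate l → cup act k m f g l = 0 := by
  rintro l hl ⟨p, a, q, rfl⟩
  have g0 := goodFace0 (X := X)
  have g1 := goodFace1 act hidem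
  have hn : p.length + 1 < k + m := by
    simp at hl; omega
  generalize hN : k + m = n at *
  unfold cup
  rw [hN]
  generalize hi : p.length = i at *
  set l := p ++ a :: a :: q with hl'
  set T : Finset ℕ → A := fun S => (shuffleSign S (Finset.range n \ S) : A) *
        (f (multiFace face0 S l) *
          g (multiFace (face1 act) (Finset.range n \ S) l)) with hT
  have neither : ∀ S : Finset ℕ, i ∉ S → i + 1 ∉ S → T S = 0 := by
    intro S h1 h2
    simp only [hT]
    rw [hf _ (g0.degenerate S p a q (hi ▸ h1) (hi ▸ h2))]
    simp
  have both : ∀ S : Finset ℕ, i ∈ S → i + 1 ∈ S → T S = 0 := by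
    intro S h1 h2
    simp only [hT]
    rw [hg _ (g1.degenerate _ p a q (by simp [hi, h1]) (by simp [hi, h2]))]
    simp
  have cancel : ∀ R : Finset ℕ, i ∉ R → i + 1 ∉ R →
      T (insert i R) + T (insert (i + 1) R) = 0 := by
    intro R h1 h2
    obtain ⟨Q, hQ⟩ : ∃ Q, Q = ((Finset.range n \ R).erase i).erase (i + 1) := ⟨_, rfl⟩
    have q1 : i ∉ Q := by simp [hQ]
    have q2 : i + 1 ∉ Q := by simp [hQ]
    have c1 : Finset.range n \ insert i R = insert (i + 1) Q := by
      ext x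
      simp only [hQ, Finset.mem_sdiff, Finset.mem_insert, Finset.mem_erase, Finset.mem_range]
      by_cases hx : x = i + 1
      · subst hx; simp [h2, hn]
      · tauto
    have c2 : Finset.range n \ insert (i + 1) R = insert i Q := by
      ext x
      simp only [hQ, Finset.mem_sdiff, Finset.mem_insert, Finset.mem_erase, Finset.mem_range]
      by_cases hx : x = i
      · subst hx; simp [h1]; omega
      · tauto
    have s0 := g0.swap R p a q (hi ▸ h1) (hi ▸ h2)
    have s1 := g1.swap Q p a q (hi ▸ q1) (hi ▸ q2)
    rw [hi, ← hl'] at s0 s1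
    simp only [hT]
    rw [c1, c2, s0, s1, shuffleSign_swap i R Q h1 h2 q1 q2]
    push_cast
    ring
  have im1 : ∀ R : Finset ℕ, i ∉ R → i + 1 ∉ R →
      (insert i R).image (Equiv.swap i (i + 1)) = insert (i + 1) R := by
    intro R h1 h2
    rw [Finset.image_insert, image_swap_insert i R h1 h2, Equiv.swap_apply_left]
  have im2 : ∀ R : Finset ℕ, i ∉ R → i + 1 ∉ R →
      (insert (i + 1) R).image (Equiv.swap i (i + 1)) = insert i R := by
    intro R h1 h2
    rw [Finset.image_insert, image_swap_insert i R h1 h2, Equiv.swap_apply_right]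
  have cases4 : ∀ S : Finset ℕ, (T S = 0 ∧ S.image (Equiv.swap i (i + 1)) = S) ∨
      ∃ R, i ∉ R ∧ i + 1 ∉ R ∧ (S = insert i R ∨ S = insert (i + 1) R) := by
    intro S
    by_cases h1 : i ∈ S <;> by_cases h2 : i + 1 ∈ S
    · left
      refine ⟨both S h1 h2, ?_⟩
      have : S = insert i (insert (i + 1) ((S.erase i).erase (i + 1))) := by
        ext x
        simp only [Finset.mem_insert, Finset.mem_erase]
        by_cases hx : x = i
        · subst hx; simp [h1]
        · by_cases hx' : x = i + 1
          · subst hx'; simp [h2]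
          · simp [hx, hx']
      rw [this, Finset.image_insert, im2 _ (by simp) (by simp), Equiv.swap_apply_left,
        Finset.insert_comm]
    · right
      exact ⟨S.erase i, by simp, by simp [h2], Or.inl (Finset.insert_erase h1).symm⟩
    · right
      exact ⟨S.erase (i + 1), by simp [h1], by simp, Or.inr (Finset.insert_erase h2).symm⟩
    · left
      exact ⟨neither S h1 h2, image_swap_insert i S h1 h2⟩
  have hsum : ∑ S ∈ Finset.powersetCard m (Finset.range n), T S = 0 := by
    apply Finset.sum_involution (fun S _ => S.image (Equiv.swap i (i + 1)))
    · intro S _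
      rcases cases4 S with ⟨h0, he⟩ | ⟨R, h1, h2, rfl | rfl⟩
      · rw [he, h0, add_zero]
      · rw [im1 R h1 h2, cancel R h1 h2]
      · rw [im2 R h1 h2, add_comm, cancel R h1 h2]
    · intro S _ hne
      rcases cases4 S with ⟨h0, he⟩ | ⟨R, h1, h2, rfl | rfl⟩
      · exact absurd h0 hne
      · rw [im1 R h1 h2]
        intro h
        have : i ∈ insert (i + 1) R := h ▸ Finset.mem_insert_self _ _
        simp [h1] at this
      · rw [im2 R h1 h2]
        intro h
        have : i + 1 ∈ insert i R := h ▸ Finset.mem_insert_self _ _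
        simp [h2] at this
    · intro S _
      simp [Finset.image_image, Function.comp_def]
    · intro S hS
      rw [Finset.mem_powersetCard] at hS ⊢
      refine ⟨?_, by rw [Finset.card_image_of_injective _ (Equiv.injective _)]; exact hS.2⟩
      intro x hx
      obtain ⟨y, hy, rfl⟩ := Finset.mem_image.1 hx
      have := Finset.mem_range.1 (hS.1 hy)
      rw [Finset.mem_range, Equiv.swap_apply_def]
      split_ifs <;> omega
  show (-1 : A) ^ (k * m) * ∑ S ∈ Finset.powersetCard m (Finset.range n), T S = 0
  rw [hsum, mul_zero]
end

section
/- Let X be a □-set and define τ(x) = Σ_{σ ∈ S_n} ε(σ)·σ(x) for x ∈ X_n, where σ(x) = (x; {σ(1)};…;{σ(n)}) is the n-simplex of the triangulated Δ-set T(X). Then τ is a chain map from the cubical chain complex of X to the simplicial chain complex of T(X): δ(τ(x)) = τ(δ(x)), where δ on the cubical side is Σᵢ(-1)ⁱ(δ⁰ᵢ - δ¹ᵢ) and on the simplicial side Σᵢ(-1)ⁱδᵢ. -/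
/-- A `□`-set: sets `Xₙ` with cubical face maps `δ^ε_i : X_{n+1} → X_n` (0-based
index `i ≤ n`) satisfying `δ^η_{j-1} δ^ε_i = δ^ε_i δ^η_j` for `i < j`. -/
structure BoxSet where
  obj : ℕ → Type
  face : Bool → (n : ℕ) → ℕ → obj (n + 1) → obj n
  rel : ∀ (ε η : Bool) (n i j : ℕ), i < j → j ≤ n + 1 →
    ∀ x : obj (n + 2),
      face η n (j - 1) (face ε (n + 1) i x) = face ε n i (face η (n + 1) j x)

namespace BoxSet

/-- Basis of the simplicial chain group of the triangulation `T(X)`: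
a cube together with a coloring of its coordinates (the `k`-partition `(S₁;…;S_k)`
of `[n]` encoded as the function sending a coordinate to the (0-based) index of its
block). -/
def SimpBasis (B : BoxSet) : Type := Σ n : ℕ, B.obj n × (Fin n → ℕ)

/-- Iterated cubical faces `δ^ε_S`, indices applied head first (so a descending list
realizes `δ^ε_{s₁} ∘ ⋯ ∘ δ^ε_{s_m}` with `s₁ < ⋯ < s_m`). -/
def faceIter (B : BoxSet) (ε : Bool) : (l : List ℕ) → (n : ℕ) → B.obj (n + l.length) → B.obj n
  | [], _, x => x
  | i :: t, n, x => faceIter B ε t n (B.face ε (n + t.length) i x)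

/-- The end faces `δ₀` (with `ε = 1`, `v = 0`) and `δ_k` (with `ε = 0`, `v = k-1`) of
`T(X)`: remove the block of color `v`, applying the corresponding cubical faces, and
relabel the remaining coordinates and colors order-preservingly. -/
noncomputable def removeFace (B : BoxSet) (ε : Bool) (v : ℕ) : B.SimpBasis → B.SimpBasis
  | ⟨n, x, c⟩ =>
    let T : Finset (Fin n) := Finset.univ.filter fun j => c j = v
    ⟨n - T.card,
      B.faceIter ε (((T.sort (· ≤ ·)).map Fin.val).reverse) (n - T.card)
        (cast (congrArg B.obj (by
          have h1 : (((T.sort (· ≤ ·)).map Fin.val).reverse).length = T.card := by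
            simp
          have h2 : T.card ≤ n := by simpa using Finset.card_le_univ T
          omega)) x),
      fun j =>
        match ((Tᶜ).sort (· ≤ ·))[(j : ℕ)]? with
        | some a => if v = 0 then c a - 1 else c a
        | none => 0⟩

/-- The middle face `δᵢ` (`0 < i < k`) of `T(X)`: merge the blocks of colors `i-1`
and `i`. -/
def mergeFace (B : BoxSet) (i : ℕ) : B.SimpBasis → B.SimpBasis
  | ⟨n, x, c⟩ => ⟨n, x, fun j => if c j < i then c j else c j - 1⟩

/-- The simplicial boundary `Σ_{i=0}^{k} (-1)ⁱ δᵢ` of a `k`-simplex of `T(X)`. -/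
noncomputable def simpBnd (B : BoxSet) (k : ℕ) (s : B.SimpBasis) : B.SimpBasis →₀ ℤ :=
  Finsupp.single (B.removeFace true 0 s) 1
    + ∑ i ∈ Finset.Ioo 0 k, Finsupp.single (B.mergeFace i s) ((-1) ^ i)
    + Finsupp.single (B.removeFace false (k - 1) s) ((-1) ^ k)

/-- `τ(x) = Σ_{σ ∈ S_n} ε(σ) σ(x)`, where `σ(x)` is the simplex of `T(X)` with
singleton blocks `Sᵢ = {σ(i)}` (i.e. coloring `σ.symm`). -/
noncomputable def tau (B : BoxSet) (n : ℕ) (x : B.obj n) : B.SimpBasis →₀ ℤ :=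
  ∑ σ : Equiv.Perm (Fin n),
    Finsupp.single (⟨n, x, fun j => ((σ.symm j : Fin n) : ℕ)⟩ : B.SimpBasis)
      ((Equiv.Perm.sign σ : ℤ))

theorem sort_compl_singleton {n : ℕ} (p : Fin (n + 1)) (j : Fin n) :
    ((({p} : Finset (Fin (n + 1)))ᶜ).sort (· ≤ ·))[(j : ℕ)]? = some (p.succAbove j) := by
  have hc : (({p} : Finset (Fin (n + 1)))ᶜ).card = n := by simp [Finset.card_compl]
  have h := Finset.orderEmbOfFin_unique hc (f := p.succAbove)
    (fun x => by simp) (Fin.strictMono_succAbove p)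
  have h2 := congrFun h j
  rw [h2, Finset.orderEmbOfFin_apply]
  simp [hc]

theorem removeFace_aux (B : BoxSet) (ε : Bool) (v n : ℕ) (x : B.obj (n + 1))
    (c : Fin (n + 1) → ℕ) (p : Fin (n + 1)) (m : ℕ) (hm : m = 1)
    (l : List ℕ) (hl : l = [(p : ℕ)])
    (g : Fin (n + 1 - m) → ℕ)
    (hg : ∀ (j : Fin (n + 1 - m)) (j' : Fin n), (j : ℕ) = j' →
      g j = if v = 0 then c (p.succAbove j') - 1 else c (p.succAbove j'))
    (h : B.obj (n + 1) = B.obj (n + 1 - m + l.length)) :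
    (⟨n + 1 - m, B.faceIter ε l (n + 1 - m) (cast h x), g⟩ : B.SimpBasis) =
    ⟨n, B.face ε n p x, fun j =>
      if v = 0 then c (p.succAbove j) - 1 else c (p.succAbove j)⟩ := by
  subst hm hl
  have : g = fun j : Fin n =>
      if v = 0 then c (p.succAbove j) - 1 else c (p.succAbove j) := by
    funext j
    exact hg j j rfl
  rw [← this]
  rfl

theorem removeFace_single (B : BoxSet) (ε : Bool) (v n : ℕ) (x : B.obj (n + 1))
    (c : Fin (n + 1) → ℕ) (p : Fin (n + 1)) (hp : ∀ j, c j = v ↔ j = p) :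
    B.removeFace ε v ⟨n + 1, x, c⟩ =
    ⟨n, B.face ε n p x, fun j =>
      if v = 0 then c (p.succAbove j) - 1 else c (p.succAbove j)⟩ := by
  have hT : (Finset.univ.filter fun j => c j = v) = {p} := by
    ext j; simp [hp]
  refine removeFace_aux B ε v n x c p (Finset.univ.filter fun j => c j = v).card ?_
    ((((Finset.univ.filter fun j => c j = v).sort (· ≤ ·)).map Fin.val).reverse) ?_
    _ ?_ _
  · rw [hT]; rfl
  · rw [hT]; simp
  · intro j j' hj
    have h := sort_compl_singleton p j'
    rw [← hT, ← hj] at h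
    simp only [h]

/-- The permutation of `Fin (n+1)` with `0 ↦ p`, `j+1 ↦ p.succAbove (e j)`. -/
def extPerm {n : ℕ} (q : Fin (n + 1) × Equiv.Perm (Fin n)) : Equiv.Perm (Fin (n + 1)) :=
  q.1.cycleRange.symm * Equiv.Perm.decomposeFin.symm (0, q.2)

theorem extPerm_zero {n : ℕ} (q : Fin (n + 1) × Equiv.Perm (Fin n)) : extPerm q 0 = q.1 := by
  simp [extPerm]

theorem extPerm_succ {n : ℕ} (q : Fin (n + 1) × Equiv.Perm (Fin n)) (j : Fin n) :
    extPerm q j.succ = q.1.succAbove (q.2 j) := by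
  simp [extPerm]

theorem extPerm_sign {n : ℕ} (q : Fin (n + 1) × Equiv.Perm (Fin n)) :
    ((Equiv.Perm.sign (extPerm q) : ℤˣ) : ℤ) = (-1) ^ (q.1 : ℕ) * (Equiv.Perm.sign q.2 : ℤ) := by
  simp [extPerm]

theorem extPerm_bijective (n : ℕ) :
    Function.Bijective (extPerm : Fin (n + 1) × Equiv.Perm (Fin n) → _) := by
  rw [Fintype.bijective_iff_injective_and_card]
  constructor
  · rintro ⟨p, e⟩ ⟨p', e'⟩ h
    have h0 : p = p' := by
      have := congrArg (fun σ => σ 0) h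
      simpa [extPerm_zero] using this
    subst h0
    congr 1
    ext j
    have := congrArg (fun σ => σ j.succ) h
    simp only [extPerm_succ] at this
    rw [Fin.succAbove_right_injective this]
  · simp [Fintype.card_perm, Nat.factorial_succ]

theorem smul_single_congr {α : Type} {s t : α} {a b c d : ℤ} (h : s = t) (h2 : a * b = c * d) :
    a • Finsupp.single s b = c • Finsupp.single t d := by
  rw [h, Finsupp.smul_single, Finsupp.smul_single, smul_eq_mul, smul_eq_mul, h2]

theorem mk_congr (B : BoxSet) {n : ℕ} (x : B.obj n) {c d : Fin n → ℕ} (h : ∀ j, c j = d j) :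
    (⟨n, x, c⟩ : B.SimpBasis) = ⟨n, x, d⟩ := by
  rw [funext h]

theorem sum_first (B : BoxSet) (n : ℕ) (x : B.obj (n + 1)) :
    ∑ σ : Equiv.Perm (Fin (n + 1)), (Equiv.Perm.sign σ : ℤ) •
      Finsupp.single (B.removeFace true 0
        ⟨n + 1, x, fun j => ((σ.symm j : Fin (n + 1)) : ℕ)⟩) (1 : ℤ) =
    ∑ i : Fin (n + 1), ((-1 : ℤ) ^ (i : ℕ)) • B.tau n (B.face true n i x) := by
  rw [← (extPerm_bijective n).sum_comp, Fintype.sum_prod_type]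
  refine Finset.sum_congr rfl fun p _ => ?_
  rw [tau, Finset.smul_sum]
  refine Finset.sum_congr rfl fun e _ => ?_
  refine smul_single_congr ((removeFace_single B true 0 n x _ p ?_).trans ?_) ?_
  rotate_left
  · have : ∀ j, (extPerm (p, e)).symm (p.succAbove j) = (e.symm j).succ := by
      intro j
      rw [Equiv.symm_apply_eq, extPerm_succ]
      simp
    refine mk_congr B _ fun j => ?_
    simp [this]
  · rw [extPerm_sign, mul_one]
  · intro j
    have : ((((extPerm (p, e)).symm j : Fin (n + 1)) : ℕ) = 0) ↔ (extPerm (p, e)).symm j = 0 := by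
      rw [Fin.ext_iff]; rfl
    rw [this, Equiv.symm_apply_eq, extPerm_zero]

theorem sum_last (B : BoxSet) (n : ℕ) (x : B.obj (n + 1)) :
    ∑ σ : Equiv.Perm (Fin (n + 1)), (Equiv.Perm.sign σ : ℤ) •
      Finsupp.single (B.removeFace false n
        ⟨n + 1, x, fun j => ((σ.symm j : Fin (n + 1)) : ℕ)⟩) ((-1 : ℤ) ^ (n + 1)) =
    ∑ i : Fin (n + 1), ((-1 : ℤ) ^ ((i : ℕ) + 1)) • B.tau n (B.face false n i x) := by
  rw [← (Equiv.mulRight (finRotate (n + 1))).bijective.sum_comp,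
    ← (extPerm_bijective n).sum_comp, Fintype.sum_prod_type]
  refine Finset.sum_congr rfl fun p _ => ?_
  rw [tau, Finset.smul_sum]
  refine Finset.sum_congr rfl fun e _ => ?_
  refine smul_single_congr ((removeFace_single B false n n x _ p ?_).trans ?_) ?_
  rotate_left
  · have h : ∀ j, (extPerm (p, e) * finRotate (n + 1)).symm (p.succAbove j)
        = (e.symm j).castSucc := by
      intro j
      rw [Equiv.symm_apply_eq, Equiv.Perm.mul_apply, finRotate_apply,
        Fin.coeSucc_eq_succ, extPerm_succ]
      simp
    refine mk_congr B _ fun j => ?_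
    have := j.isLt
    have hn : n ≠ 0 := by omega
    simp only [Equiv.coe_mulRight, h]
    simp [hn]
  · have hs : ((Equiv.Perm.sign (extPerm (p, e) * finRotate (n + 1)) : ℤˣ) : ℤ) *
        (-1) ^ (n + 1) = (-1) ^ ((p : ℕ) + 1) * (Equiv.Perm.sign e : ℤ) := by
      rw [Equiv.Perm.sign_mul, Units.val_mul, extPerm_sign, sign_finRotate]
      have : ((-1 : ℤ) ^ n) * (-1) ^ n = 1 := by
        rw [← mul_pow]; simp
      push_cast
      simp only [pow_succ]
      linear_combination (-(-1) ^ (p : ℕ) * (Equiv.Perm.sign e : ℤ)) * this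
    exact hs
  · intro j
    have : ((((extPerm (p, e) * finRotate (n + 1)).symm j : Fin (n + 1)) : ℕ) = n) ↔
        (extPerm (p, e) * finRotate (n + 1)).symm j = Fin.last n := by
      rw [Fin.ext_iff]; rfl
    simp only [Equiv.coe_mulRight]
    rw [this, Equiv.symm_apply_eq, Equiv.Perm.mul_apply, finRotate_last, extPerm_zero]

theorem sum_mid (B : BoxSet) (n : ℕ) (x : B.obj (n + 1)) (i : ℕ)
    (hi : i ∈ Finset.Ioo 0 (n + 1)) :
    ∑ σ : Equiv.Perm (Fin (n + 1)), (Equiv.Perm.sign σ : ℤ) •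
      Finsupp.single (B.mergeFace i
        ⟨n + 1, x, fun j => ((σ.symm j : Fin (n + 1)) : ℕ)⟩) ((-1 : ℤ) ^ i) = 0 := by
  rw [Finset.mem_Ioo] at hi
  obtain ⟨h0, h1⟩ := hi
  let a : Fin (n + 1) := ⟨i - 1, by omega⟩
  let b : Fin (n + 1) := ⟨i, h1⟩
  have hab : a ≠ b := by
    intro h
    have := congrArg Fin.val h
    simp only [a, b] at this
    omega
  refine Finset.sum_involution (fun σ _ => σ * Equiv.swap a b) ?_ ?_ ?_ ?_
  · intro σ _
    have : B.mergeFace i ⟨n + 1, x, fun j =>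
          (((σ * Equiv.swap a b).symm j : Fin (n + 1)) : ℕ)⟩ =
        B.mergeFace i ⟨n + 1, x, fun j => ((σ.symm j : Fin (n + 1)) : ℕ)⟩ := by
      unfold mergeFace
      simp only
      congr 2
      funext j
      have hj : (σ * Equiv.swap a b).symm j = Equiv.swap a b (σ.symm j) := rfl
      rw [hj, Equiv.swap_apply_def]
      split_ifs <;> simp_all [a, b]
    rw [this, Equiv.Perm.sign_mul, Equiv.Perm.sign_swap hab]
    simp
  · intro σ _ _ h
    have : Equiv.swap a b = 1 := by simpa using h
    exact hab (Equiv.swap_eq_one_iff.mp this)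
  · intro σ _; simp
  · intro σ _; simp [mul_assoc]

/-- `τ` is a chain map: the simplicial boundary of `τ(x)` equals `τ` of the cubical
boundary `Σᵢ (-1)ⁱ (δ⁰ᵢ - δ¹ᵢ) x`. -/
theorem stmt_19 (B : BoxSet) (n : ℕ) (x : B.obj (n + 1)) :
    ((B.tau (n + 1) x).sum fun s z => z • B.simpBnd (n + 1) s) =
      ∑ i ∈ Finset.range (n + 1),
        ((-1 : ℤ) ^ (i + 1)) •
          (B.tau n (B.face false n i x) - B.tau n (B.face true n i x)) := by
  have hL : ((B.tau (n + 1) x).sum fun s z => z • B.simpBnd (n + 1) s) =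
      ∑ σ : Equiv.Perm (Fin (n + 1)), (Equiv.Perm.sign σ : ℤ) • B.simpBnd (n + 1)
        ⟨n + 1, x, fun j => ((σ.symm j : Fin (n + 1)) : ℕ)⟩ := by
    unfold tau
    rw [← Finsupp.sum_finsetSum_index (by simp) (by intros; rw [add_smul])]
    refine Finset.sum_congr rfl fun σ _ => ?_
    exact Finsupp.sum_single_index (zero_smul _ _)
  rw [hL]
  simp only [simpBnd, smul_add, Finset.sum_add_distrib, Finset.smul_sum,
    Nat.add_sub_cancel]
  rw [Finset.sum_comm, Finset.sum_eq_zero (sum_mid B n x), sum_first, sum_last, add_zero,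
    Finset.sum_range, ← Finset.sum_add_distrib]
  refine Finset.sum_congr rfl fun i _ => ?_
  rw [pow_succ]
  simp only [mul_neg, mul_one, neg_smul, smul_sub]
  abel

end BoxSet
end
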